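/- The function q(s) := s·ψ′(s+1), where ψ′ is the trigamma function (the derivative of the digamma function ψ = (log Γ)′), is strictly increasing on (0,∞). -/

import Mathlib

open Real

/-- The trigamma function `ψ'`, the second derivative of `log Γ`. -/
noncomputable def trigamma : ℝ → ℝ :=
  deriv (deriv (fun x : ℝ => Real.log (Real.Gamma x)))

/-!
Summing over `k` the termwise comparisons

* `1 / (x + k) - 1 / (x + k + 1) < 1 / (x + k) ^ 2`,
* `1 / (a + k) ^ 2 - 1 / (b + k) ^ 2 ≤ u k - u (k + 1)` with
  `u k = (b - a) / ((a - 1 + k) * (b + k))` and `1 < a ≤ b`,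

both of which telescope, gives `1 / x < ψ' x` and `(a - 1) * (ψ' a - ψ' b) ≤ (b - a) / b`. Take
`a = s + 1` and `b = t + 1` with `s < t`: in
`t * ψ' b - s * ψ' a = (t - s) * ψ' b - s * (ψ' a - ψ' b)`
the first term on the right exceeds `(t - s) / b`, and the second one is at most that.
-/

open Filter Set Topology

section LinearOrderedField

variable {𝕜 : Type*} [Field 𝕜] [LinearOrder 𝕜] [IsStrictOrderedRing 𝕜] {a b x : 𝕜}

theorem one_div_sub_one_div_add_one_lt (hx : 0 < x) : 1 / x - 1 / (x + 1) < 1 / x ^ 2 :=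
  calc
    1 / x - 1 / (x + 1) = 1 / (x * (x + 1)) := by field_simp; ring
    _ < 1 / x ^ 2 := by rw [sq]; gcongr; exact lt_add_one x

theorem one_div_sq_sub_one_div_sq_le (ha : 1 < a) (hab : a ≤ b) :
    1 / a ^ 2 - 1 / b ^ 2 ≤ (b - a) / ((a - 1) * b) - (b - a) / (a * (b + 1)) := by
  have : 0 < a - 1 := sub_pos.2 ha
  have hb : 0 < b := by linarith
  have : 0 ≤ b - a := sub_nonneg.2 hab
  have mul_le : (a - 1) * (b + 1) ≤ a * b := by linarith
  calc
    1 / a ^ 2 - 1 / b ^ 2 = (b - a) * (a + b) / (a * b * (a * b)) := by field_simp; ring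
    _ ≤ (b - a) * (a + b) / (a * b * ((a - 1) * (b + 1))) := by gcongr
    _ = (b - a) / ((a - 1) * b) - (b - a) / (a * (b + 1)) := by field_simp; ring

end LinearOrderedField

section Telescoping

theorem hasSum_sub_succ_of_antitone {u : ℕ → ℝ} {l : ℝ} (hu : Antitone u)
    (hl : Tendsto u atTop (𝓝 l)) : HasSum (fun k ↦ u k - u (k + 1)) (u 0 - l) := by
  rw [hasSum_iff_tendsto_nat_of_nonneg fun k ↦ sub_nonneg.2 (hu k.le_succ)]
  simpa only [Finset.sum_range_sub'] using hl.const_sub (u 0)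

theorem tendsto_const_add_natCast_atTop (x : ℝ) : Tendsto (fun k : ℕ ↦ x + k) atTop atTop :=
  tendsto_atTop_add_const_left _ x tendsto_natCast_atTop_atTop

theorem hasSum_one_div_add_sub_one_div_add_succ {x : ℝ} (hx : 0 < x) :
    HasSum (fun k : ℕ ↦ 1 / (x + k) - 1 / (x + (k + 1 : ℕ))) (1 / x) := by
  have anti : Antitone fun k : ℕ ↦ 1 / (x + k) := fun i j hij ↦ by
    beta_reduce
    gcongr
  simpa using hasSum_sub_succ_of_antitone anti
    ((tendsto_const_add_natCast_atTop x).const_div_atTop 1)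

theorem hasSum_div_add_mul_add_sub_succ {a b c : ℝ} (ha : 0 < a) (hb : 0 < b) (hc : 0 ≤ c) :
    HasSum (fun k : ℕ ↦ c / ((a + k) * (b + k)) - c / ((a + (k + 1 : ℕ)) * (b + (k + 1 : ℕ))))
      (c / (a * b)) := by
  have anti : Antitone fun k : ℕ ↦ c / ((a + k) * (b + k)) := fun i j hij ↦ by
    beta_reduce
    gcongr
  have tendsto_zero : Tendsto (fun k : ℕ ↦ c / ((a + k) * (b + k))) atTop (𝓝 0) :=
    ((tendsto_const_add_natCast_atTop a).atTop_mul_atTop₀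
      (tendsto_const_add_natCast_atTop b)).const_div_atTop c
  simpa using hasSum_sub_succ_of_antitone anti tendsto_zero

end Telescoping

section Digamma

/-- The digamma function `ψ` on the real line, as the derivative of `log Γ`, so that `trigamma` is
by definition its derivative. -/
noncomputable def digamma : ℝ → ℝ := deriv fun x ↦ log (Gamma x)

variable {a x : ℝ}

theorem differentiableAt_log_Gamma (hx : 0 < x) : DifferentiableAt ℝ (fun y ↦ log (Gamma y)) x :=
  ((differentiableOn_Gamma_Ioi x hx).differentiableAt (Ioi_mem_nhds hx)).log
    (Gamma_pos_of_pos hx).ne'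

theorem hasDerivAt_log_Gamma (hx : 0 < x) : HasDerivAt (fun y ↦ log (Gamma y)) (digamma x) x :=
  (differentiableAt_log_Gamma hx).hasDerivAt

theorem log_Gamma_add_one (hx : 0 < x) : log (Gamma (x + 1)) = log (Gamma x) + log x := by
  rw [Gamma_add_one hx.ne', log_mul hx.ne' (Gamma_pos_of_pos hx).ne', add_comm]

theorem slope_log_Gamma_add_one (hx : 0 < x) :
    slope (fun y ↦ log (Gamma y)) x (x + 1) = log x := by
  simp [slope_def_field, log_Gamma_add_one hx]

theorem digamma_add_one (hx : 0 < x) : digamma (x + 1) = digamma x + 1 / x := by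
  have shifted : HasDerivAt (fun y ↦ log (Gamma (y + 1))) (digamma (x + 1)) x :=
    (hasDerivAt_log_Gamma (by positivity : 0 < x + 1)).comp_add_const x 1
  have expanded : HasDerivAt (fun y ↦ log (Gamma y) + log y) (digamma x + 1 / x) x := by
    simpa using (hasDerivAt_log_Gamma hx).fun_add (hasDerivAt_log hx.ne')
  refine shifted.unique (expanded.congr_of_eventuallyEq ?_)
  filter_upwards [Ioi_mem_nhds hx] with y hy using log_Gamma_add_one hy

theorem digamma_add_natCast (hx : 0 < x) (n : ℕ) :
    digamma (x + n) = digamma x + ∑ k ∈ Finset.range n, 1 / (x + k) := by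
  induction n with
  | zero => simp
  | succ n ih =>
    rw [Finset.sum_range_succ, ← add_assoc, ← ih, ← digamma_add_one (by positivity),
      Nat.cast_succ, add_assoc]

theorem digamma_le_log (hx : 0 < x) : digamma x ≤ log x :=
  slope_log_Gamma_add_one hx ▸ convexOn_log_Gamma.deriv_le_slope hx
    (by positivity : 0 < x + 1) (lt_add_one x) (differentiableAt_log_Gamma hx)

theorem log_le_digamma_add_one (hx : 0 < x) : log x ≤ digamma (x + 1) :=
  have hx' : 0 < x + 1 := by positivity
  slope_log_Gamma_add_one hx ▸ convexOn_log_Gamma.slope_le_deriv hx hx' (lt_add_one x)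
    (differentiableAt_log_Gamma hx')

theorem tendsto_digamma_sub_log_atTop : Tendsto (fun x ↦ digamma x - log x) atTop (𝓝 0) := by
  have lower : Tendsto (fun x : ℝ ↦ -(1 / x)) atTop (𝓝 0) := by
    simpa using (tendsto_inv_atTop_zero (𝕜 := ℝ)).neg
  refine tendsto_of_tendsto_of_tendsto_of_le_of_le' lower tendsto_const_nhds ?_ ?_
  · filter_upwards [eventually_gt_atTop 0] with x hx
    linarith [log_le_digamma_add_one hx, digamma_add_one hx]
  · filter_upwards [eventually_gt_atTop 0] with x hx
    linarith [digamma_le_log hx]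

theorem tendsto_log_sub_sum_one_div_digamma (hx : 0 < x) :
    Tendsto (fun n : ℕ ↦ log n - ∑ k ∈ Finset.range n, 1 / (x + k)) atTop (𝓝 (digamma x)) := by
  have digamma_sub : Tendsto (fun n : ℕ ↦ digamma (x + n) - log (x + n)) atTop (𝓝 0) :=
    tendsto_digamma_sub_log_atTop.comp (tendsto_const_add_natCast_atTop x)
  have log_sub : Tendsto (fun n : ℕ ↦ log (n + x) - log n) atTop (𝓝 0) :=
    (tendsto_log_comp_add_sub_log x).comp tendsto_natCast_atTop_atTop
  convert! (digamma_sub.add log_sub).const_sub (digamma x) using 2 with n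
  · rw [digamma_add_natCast hx, add_comm x]
    ring
  · simp

theorem hasSum_digamma_sub_digamma (ha : 0 < a) (hax : a ≤ x) :
    HasSum (fun k : ℕ ↦ 1 / (a + k) - 1 / (x + k)) (digamma x - digamma a) := by
  have nonneg (k : ℕ) : 0 ≤ 1 / (a + k) - 1 / (x + k) := sub_nonneg.2 (by gcongr)
  rw [hasSum_iff_tendsto_nat_of_nonneg nonneg]
  refine ((tendsto_log_sub_sum_one_div_digamma (ha.trans_le hax)).sub
    (tendsto_log_sub_sum_one_div_digamma ha)).congr fun n ↦ ?_
  rw [Finset.sum_sub_distrib]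
  ring

end Digamma

section Trigamma

variable {a b x : ℝ}

theorem summable_one_div_add_natCast_sq (x : ℝ) : Summable fun k : ℕ ↦ 1 / (x + k) ^ 2 := by
  simpa [add_comm] using (summable_one_div_nat_add_rpow x 2).2 one_lt_two

theorem hasDerivAt_const_sub_one_div_add {𝕜 : Type*} [NontriviallyNormedField 𝕜] {x : 𝕜} (c k : 𝕜)
    (hx : x + k ≠ 0) : HasDerivAt (fun y ↦ c - 1 / (y + k)) (1 / (x + k) ^ 2) x := by
  simpa [neg_div] using (((hasDerivAt_id' x).add_const k).fun_inv hx).const_sub c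

theorem hasDerivAt_tsum_one_div_sub_one_div_add (ha : 0 < a) (hax : a < x) :
    HasDerivAt (fun y ↦ ∑' k : ℕ, (1 / (a + k) - 1 / (y + k))) (∑' k : ℕ, 1 / (x + k) ^ 2) x := by
  refine hasDerivAt_tsum_of_isPreconnected (g := fun (k : ℕ) y ↦ 1 / (a + k) - 1 / (y + k))
    (g' := fun (k : ℕ) y ↦ 1 / (y + k) ^ 2) (summable_one_div_add_natCast_sq a)
    isOpen_Ioi isPreconnected_Ioi (fun k y (hy : a < y) ↦ ?_) (fun k y (hy : a < y) ↦ ?_)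
    hax (hasSum_digamma_sub_digamma ha hax.le).summable hax
  · have : 0 < y := ha.trans hy
    exact hasDerivAt_const_sub_one_div_add _ _ (by positivity)
  · rw [norm_of_nonneg (by positivity)]
    gcongr

theorem hasSum_trigamma (hx : 0 < x) : HasSum (fun k : ℕ ↦ 1 / (x + k) ^ 2) (trigamma x) := by
  obtain ⟨a, ha, hax⟩ := exists_between hx
  have deriv_digamma : HasDerivAt digamma (∑' k : ℕ, 1 / (x + k) ^ 2) x := by
    refine ((hasDerivAt_tsum_one_div_sub_one_div_add ha hax).add_const
      (digamma a)).congr_of_eventuallyEq ?_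
    filter_upwards [Ioi_mem_nhds hax] with y hy
    rw [(hasSum_digamma_sub_digamma ha (le_of_lt hy)).tsum_eq, sub_add_cancel]
  have : trigamma x = ∑' k : ℕ, 1 / (x + k) ^ 2 := deriv_digamma.deriv
  exact this ▸ (summable_one_div_add_natCast_sq x).hasSum

theorem one_div_lt_trigamma (hx : 0 < x) : 1 / x < trigamma x := by
  have termwise (k : ℕ) : 1 / (x + k) - 1 / (x + (k + 1 : ℕ)) < 1 / (x + k) ^ 2 := by
    simpa [add_assoc] using one_div_sub_one_div_add_one_lt (by positivity : 0 < x + k)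
  exact hasSum_lt (fun k ↦ (termwise k).le) (termwise 0)
    (hasSum_one_div_add_sub_one_div_add_succ hx) (hasSum_trigamma hx)

theorem trigamma_sub_trigamma_le (ha : 1 < a) (hab : a ≤ b) :
    trigamma a - trigamma b ≤ (b - a) / ((a - 1) * b) := by
  have hb : 0 < b := by linarith
  refine hasSum_le (fun k ↦ ?_)
    ((hasSum_trigamma (by positivity)).sub (hasSum_trigamma hb))
    (hasSum_div_add_mul_add_sub_succ (sub_pos.2 ha) hb (sub_nonneg.2 hab))
  have shifted := one_div_sq_sub_one_div_sq_le (a := a + k) (b := b + k)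
    (lt_add_of_lt_of_nonneg ha k.cast_nonneg) (by gcongr)
  convert! shifted using 3 <;> push_cast <;> ring

end Trigamma

/-- The function `q(s) = s · ψ'(s+1)` is strictly increasing on `(0,∞)`. -/
theorem strictMonoOn_mul_trigamma :
    StrictMonoOn (fun s : ℝ => s * trigamma (s + 1)) (Set.Ioi 0) := by
  intro s (hs : 0 < s) t (ht : 0 < t) hst
  have loss : s * (trigamma (s + 1) - trigamma (t + 1)) ≤ (t - s) / (t + 1) :=
    calc
      s * (trigamma (s + 1) - trigamma (t + 1))
        ≤ s * ((t + 1 - (s + 1)) / ((s + 1 - 1) * (t + 1))) := by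
          gcongr
          exact trigamma_sub_trigamma_le (by linarith) (by linarith)
      _ = (t - s) / (t + 1) := by
          rw [add_sub_add_right_eq_sub, add_sub_cancel_right]
          field_simp
  have gain : (t - s) / (t + 1) < (t - s) * trigamma (t + 1) := by
    rw [div_eq_mul_one_div]
    exact mul_lt_mul_of_pos_left (one_div_lt_trigamma (by positivity)) (sub_pos.2 hst)
  change s * trigamma (s + 1) < t * trigamma (t + 1)
  linarith
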